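/- If ψ : ℝ_{>0} → ℝ_{>0} is bounded, then τ(ψ) ≥ 0. Moreover, if τ(ψ) > −b_n (including the case τ(ψ) = +∞), then S(ψ)^c = ∅, i.e., every g ∈ SL_n(ℝ) is ψ-Diophantine for the standard representation. -/

import Mathlib

open MeasureTheory Filter

attribute [local instance] Matrix.frobeniusNormedAddCommGroup

noncomputable section

/-- The Euclidean norm on `ι → ℝ`. -/
def eucNorm {ι : Type*} [Fintype ι] (v : ι → ℝ) : ℝ := Real.sqrt (∑ i, (v i) ^ 2)

/-- The first minimum of a set of vectors: the infimum of the Euclidean norms of its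
nonzero elements. -/
def firstMin {ι : Type*} [Fintype ι] (Λ : Set (ι → ℝ)) : ℝ :=
  sInf {r | ∃ v ∈ Λ, v ≠ 0 ∧ eucNorm v = r}

/-- The diagonal matrix `a_t = diag(e^{b₁ t}, …, e^{bₙ t})`. -/
def aMat {n : ℕ} (b : Fin n → ℝ) (t : ℝ) : Matrix (Fin n) (Fin n) ℝ :=
  Matrix.diagonal fun i => Real.exp (b i * t)

/-- The standard lattice `ℤ^ι` inside `ι → ℝ`. -/
def intLat (ι : Type*) [Fintype ι] : Set (ι → ℝ) :=
  {v | ∃ m : ι → ℤ, v = fun i => (m i : ℝ)}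

/-- `SL_n(ℝ)` as the set of real `n × n` matrices of determinant one. -/
def SLset (n : ℕ) : Set (Matrix (Fin n) (Fin n) ℝ) := {g | g.det = 1}

/-- The set of `ψ`-Diophantine elements of `SL_n(ℝ)` for the standard representation. -/
def SDio {n : ℕ} (b : Fin n → ℝ) (ψ : ℝ → ℝ) : Set (Matrix (Fin n) (Fin n) ℝ) :=
  {g | g ∈ SLset n ∧ ∃ C > 0, ∀ t > 0,
    C * ψ t ≤ firstMin ((fun v => (aMat b t * g).mulVec v) '' intLat (Fin n))}

/-- `τ(ψ) = liminf_{t → ∞} (-ln ψ(t))/t`, as an extended real number. -/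
def tauE (ψ : ℝ → ℝ) : EReal :=
  liminf (fun t : ℝ => ((-Real.log (ψ t) / t : ℝ) : EReal)) atTop


/-- A bounded positive function has nonnegative exponential decay rate. -/
theorem tauE_nonneg {ψ : ℝ → ℝ} (hψpos : ∀ t > 0, 0 < ψ t) {M : ℝ} (hM : ∀ t > 0, ψ t ≤ M) :
    0 ≤ tauE ψ := by
  have hlim : Tendsto (fun t : ℝ => ((-Real.log M / t : ℝ) : EReal)) atTop (nhds 0) :=
    (continuous_coe_real_ereal.tendsto 0).comp (tendsto_const_nhds.div_atTop tendsto_id)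
  rw [tauE, ← hlim.liminf_eq]
  refine liminf_le_liminf ?_
  filter_upwards [eventually_gt_atTop 0] with t ht
  have := Real.log_le_log (hψpos t ht) (hM t ht)
  exact EReal.coe_le_coe_iff.2 (by gcongr)

/-- A bounded positive function whose exponential decay rate exceeds `c` is dominated
by a multiple of `exp (-c t)` on all of `t > 0`. -/
theorem exists_le_mul_exp_of_lt_tauE {ψ : ℝ → ℝ} (hψpos : ∀ t > 0, 0 < ψ t) {M : ℝ}
    (hM : ∀ t > 0, ψ t ≤ M) {c : ℝ} (hc : (c : EReal) < tauE ψ) :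
    ∃ D > 0, ∀ t > 0, ψ t ≤ D * Real.exp (-c * t) := by
  obtain ⟨T, hT⟩ := eventually_atTop.1 (eventually_lt_of_lt_liminf hc)
  have hM0 : 0 < M := (hψpos 1 one_pos).trans_le (hM 1 one_pos)
  refine ⟨max 1 (M * Real.exp (|c| * |T|)), by positivity, fun t ht => ?_⟩
  rcases le_total T t with h | h
  · have h1 : c < -Real.log (ψ t) / t := EReal.coe_lt_coe_iff.1 (hT t h)
    rw [lt_div_iff₀ ht] at h1
    calc ψ t = Real.exp (Real.log (ψ t)) := (Real.exp_log (hψpos t ht)).symm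
      _ ≤ 1 * Real.exp (-c * t) := by
        rw [one_mul]; exact Real.exp_le_exp.2 (by linarith)
      _ ≤ _ := by gcongr; exact le_max_left _ _
  · have hct : c * t ≤ |c| * |T| :=
      mul_le_mul (le_abs_self c) (h.trans (le_abs_self T)) ht.le (abs_nonneg c)
    calc ψ t ≤ M := hM t ht
      _ ≤ M * Real.exp (|c| * |T| + -c * t) :=
        le_mul_of_one_le_right hM0.le (Real.one_le_exp (by linarith))
      _ = M * Real.exp (|c| * |T|) * Real.exp (-c * t) := by rw [Real.exp_add]; ring
      _ ≤ _ := by gcongr; exact le_max_right _ _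

theorem abs_le_eucNorm {ι : Type*} [Fintype ι] (v : ι → ℝ) (i : ι) : |v i| ≤ eucNorm v :=
  Real.abs_le_sqrt (Finset.single_le_sum (f := fun i => v i ^ 2)
    (fun _ _ => sq_nonneg _) (Finset.mem_univ i))

/-- The lattice `g ℤⁿ` with `g` invertible has a positive lower bound on the norms of its
nonzero vectors. -/
theorem exists_pos_le_eucNorm_mulVec {ι : Type*} [Fintype ι] [DecidableEq ι]
    {g : Matrix ι ι ℝ} (hg : IsUnit g.det) :
    ∃ ε > 0, ∀ m : ι → ℤ, m ≠ 0 → ε ≤ eucNorm (g.mulVec fun i => (m i : ℝ)) := by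
  set K : ℝ := 1 + ∑ i, ∑ j, |g⁻¹ i j|
  have hK0 : 0 < K := by positivity
  refine ⟨K⁻¹, inv_pos.2 hK0, fun m hm => ?_⟩
  obtain ⟨i, hi⟩ := Function.ne_iff.1 hm
  set w := g.mulVec fun i => (m i : ℝ) with hw
  have hN : 0 ≤ eucNorm w := Real.sqrt_nonneg _
  have hmi : (m i : ℝ) = ∑ j, g⁻¹ i j * w j := by
    have : g⁻¹.mulVec w = fun i => (m i : ℝ) := by
      rw [hw, Matrix.mulVec_mulVec, Matrix.nonsing_inv_mul _ hg, Matrix.one_mulVec]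
    exact (congrFun this i).symm
  have h1 : (1 : ℝ) ≤ |(m i : ℝ)| := by exact_mod_cast Int.one_le_abs hi
  rw [inv_le_iff_one_le_mul₀' hK0]
  calc (1 : ℝ) ≤ |(m i : ℝ)| := h1
    _ ≤ ∑ j, |g⁻¹ i j * w j| := by rw [hmi]; exact Finset.abs_sum_le_sum_abs _ _
    _ ≤ ∑ j, |g⁻¹ i j| * eucNorm w := by
      gcongr with j
      rw [abs_mul]
      exact mul_le_mul_of_nonneg_left (abs_le_eucNorm w j) (abs_nonneg _)
    _ = (∑ j, |g⁻¹ i j|) * eucNorm w := (Finset.sum_mul ..).symm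
    _ ≤ K * eucNorm w := by
      gcongr
      have := Finset.single_le_sum (f := fun i => ∑ j, |g⁻¹ i j|)
        (fun _ _ => by positivity) (Finset.mem_univ i)
      linarith

/-- For `t ≥ 0`, the matrix `a_t` contracts the Euclidean norm by at most `exp (c t)`,
where `c` is a lower bound for the exponents. -/
theorem exp_mul_eucNorm_le {n : ℕ} {b : Fin n → ℝ} {c : ℝ} (hc : ∀ i, c ≤ b i)
    {t : ℝ} (ht : 0 ≤ t) (w : Fin n → ℝ) :
    Real.exp (c * t) * eucNorm w ≤ eucNorm ((aMat b t).mulVec w) := by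
  rw [eucNorm, eucNorm, ← Real.sqrt_sq (Real.exp_pos (c * t)).le,
    ← Real.sqrt_mul (sq_nonneg _), Finset.mul_sum]
  refine Real.sqrt_le_sqrt (Finset.sum_le_sum fun i _ => ?_)
  rw [aMat, Matrix.mulVec_diagonal, mul_pow]
  have := hc i
  gcongr

theorem isUnit_det_aMat {n : ℕ} (b : Fin n → ℝ) (t : ℝ) : IsUnit (aMat b t).det := by
  rw [aMat, Matrix.det_diagonal, isUnit_iff_ne_zero]
  exact Finset.prod_ne_zero_iff.2 fun i _ => (Real.exp_pos _).ne'

theorem tauE_nonneg_and_SDio_compl_empty_of_tau_gt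
    (n : ℕ) (hn : 2 ≤ n) (b : Fin n → ℝ)
    (hmono : ∀ i j : Fin n, i ≤ j → b j ≤ b i)
    (hsum : ∑ i, b i = 0) (hb : b ≠ 0)
    (ψ : ℝ → ℝ) (hψpos : ∀ t > 0, 0 < ψ t)
    (hbdd : ∃ M : ℝ, ∀ t > 0, ψ t ≤ M) :
    (0 : EReal) ≤ tauE ψ ∧
      (((-(b ⟨n - 1, by omega⟩) : ℝ) : EReal) < tauE ψ → SLset n \ SDio b ψ = ∅) := by
  obtain ⟨M, hM⟩ := hbdd
  refine ⟨tauE_nonneg hψpos hM, fun hτ => Set.sdiff_eq_empty.2 fun g hg => ⟨hg, ?_⟩⟩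
  have hgu : IsUnit g.det := by
    rw [show g.det = 1 from hg]
    exact isUnit_one
  obtain ⟨D, hD, hψ⟩ := exists_le_mul_exp_of_lt_tauE hψpos hM hτ
  obtain ⟨ε, hε, hgε⟩ := exists_pos_le_eucNorm_mulVec hgu
  set c := b ⟨n - 1, by omega⟩
  have hcb : ∀ i, c ≤ b i := fun i => hmono _ _ (Fin.le_def.2 (by have := i.2; simp only; omega))
  refine ⟨ε / D, div_pos hε hD, fun t ht => le_csInf ?_ ?_⟩
  · refine ⟨_, _, ⟨fun _ => 1, ⟨fun _ => 1, by simp⟩, rfl⟩, fun h => ?_, rfl⟩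
    have hu : IsUnit (aMat b t * g) := by
      rw [Matrix.isUnit_iff_isUnit_det, Matrix.det_mul]
      exact (isUnit_det_aMat b t).mul hgu
    have h0 := Matrix.mulVec_injective_of_isUnit hu (h.trans (Matrix.mulVec_zero _).symm)
    exact one_ne_zero (congrFun h0 ⟨0, by omega⟩)
  · rintro _ ⟨_, ⟨_, ⟨m, rfl⟩, rfl⟩, hv, rfl⟩
    have hm : m ≠ 0 := by
      rintro rfl
      refine hv ?_
      simp only [Pi.zero_apply, Int.cast_zero]
      exact Matrix.mulVec_zero (aMat b t * g)
    calc ε / D * ψ t ≤ ε / D * (D * Real.exp (c * t)) := by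
          have := hψ t ht
          rw [neg_neg] at this
          gcongr
      _ = Real.exp (c * t) * ε := by field_simp
      _ ≤ Real.exp (c * t) * eucNorm (g.mulVec fun i => (m i : ℝ)) := by
          gcongr
          exact hgε m hm
      _ ≤ _ := by
          simp only [← Matrix.mulVec_mulVec]
          exact exp_mul_eucNorm_le hcb ht.le _

end
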